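/- arXiv:2508.09395 — 6 statements merged into one kernel-verified Lean document; each statement's English description precedes it below -/
import Mathlib

section
/- Let f : D → ℝ be a CPWL interpolation of S with P pieces, with affine pieces f_1, …, f_P on compact domains D_1, …, D_P. Then there exists a CPWL interpolation g : D → ℝ of S with P pieces, with affine pieces g_1, …, g_P on compact domains D'_1, …, D'_P, such that for every k = 1, …, P: (i) {i ∈ {1,…,N} : x_i ∈ D_k} ⊆ {i ∈ {1,…,N} : x_i ∈ D'_k}, and (ii) the set {i ∈ {1,…,N} : x_i ∈ D'_k} has at least d+1 elements. -/
/-!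
The idea is to keep the combinatorial structure of `f` while moving each affine piece separately.

* *Moving one piece* (`exists_vertex`). Affine functions on `ℝ^d` form a space of dimension `d + 1`.
  Those `h` whose sign pattern `h (x i) - z i` weakly agrees with that of a given piece form a
  polyhedron. As the `x i` affinely span `ℝ^d`, it contains no line, hence it has a vertex,
  and at a vertex at least `d + 1` of the equations `h (x i) = z i` hold.
* *Gluing the moved pieces* (`exists_piece_crossing`). For any two points `p`, `q` of the convex hull
  some piece `k` satisfies `f_k p ≤ f p` and `f q ≤ f_k q`. Therefore `f` is the max-min
  `f = max_q min_{k ∈ S q} f_k` with `S q = {k | f q ≤ f_k q}`. Put `g = max_q min_{k ∈ S q} g_k`,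
  where `g_k` is the moved piece. It is continuous and everywhere equal to some `g_k`. Whether a
  max-min expression has the value `z i` depends only on the weak signs of its arguments
  minus `z i`, so `g (x i) = z i`. The domain of `g_k` is taken to be the whole set where `g = g_k`.
-/

open scoped RealInnerProductSpace

/-- The polyhedron of all `h'` satisfying the weak inequalities between `e i h'` and `z i` that `h`
satisfies has a vertex as soon as the functionals `e i` separate points. -/
lemma exists_vertex {V ι : Type*} [AddCommGroup V] [Module ℝ V] [FiniteDimensional ℝ V]
    [Fintype ι] (e : ι → V →ₗ[ℝ] ℝ) (he : ∀ u, (∀ i, e i u = 0) → u = 0)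
    (z : ι → ℝ) (h : V) :
    ∃ h' : V, (∀ i, z i ≤ e i h → z i ≤ e i h') ∧ (∀ i, e i h ≤ z i → e i h' ≤ z i) ∧
      Module.finrank ℝ V ≤ Set.ncard {i | e i h' = z i} := by
  classical
  set good : V → Prop := fun h' =>
    (∀ i, z i ≤ e i h → z i ≤ e i h') ∧ (∀ i, e i h ≤ z i → e i h' ≤ z i) with hgood
  let tight : V → Finset ι := fun h' => Finset.univ.filter (fun i => e i h' = z i)
  obtain ⟨T, hT, hmax⟩ := Finset.exists_max_image
    ((Finset.univ : Finset (Finset ι)).filter (fun T => ∃ h', good h' ∧ tight h' = T)) Finset.card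
    ⟨tight h, by simp only [Finset.mem_filter, Finset.mem_univ, true_and]
                 exact ⟨h, ⟨fun _ => id, fun _ => id⟩, rfl⟩⟩
  simp only [Finset.mem_filter, Finset.mem_univ, true_and] at hT hmax
  obtain ⟨h', hg, rfl⟩ := hT
  refine ⟨h', hg.1, hg.2, ?_⟩
  have hcard : Set.ncard {i | e i h' = z i} = (tight h').card := by
    rw [← Set.ncard_coe_finset]; congr 1; ext i; simp [tight]
  rw [hcard]
  by_contra! hlt
  -- Fewer than `finrank V` equations are tight, so `h'` can move along a line preserving them.
  let L : V →ₗ[ℝ] (tight h' → ℝ) := LinearMap.pi fun i => e i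
  have hker : LinearMap.ker L ≠ ⊥ := LinearMap.ker_ne_bot_of_finrank_lt (by simpa using hlt)
  obtain ⟨u, hu, hu0⟩ := (Submodule.ne_bot_iff _).1 hker
  have hut : ∀ i, e i h' = z i → e i u = 0 := by
    intro i hi
    have := congrFun (LinearMap.mem_ker.1 hu) ⟨i, by simp [tight, hi]⟩
    simpa [L] using this
  have hex : ∃ i, e i u ≠ 0 := by
    by_contra! hall
    exact hu0 (he u hall)
  -- The smallest step at which a new equation becomes tight keeps all weak inequalities.
  obtain ⟨j, hj, hmin⟩ := Finset.exists_min_image (Finset.univ.filter (fun i => e i u ≠ 0))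
    (fun i => |(z i - e i h') / e i u|) (by obtain ⟨i, hi⟩ := hex; exact ⟨i, by simp [hi]⟩)
  simp only [Finset.mem_filter, Finset.mem_univ, true_and] at hj hmin
  set t := (z j - e j h') / e j u with ht
  have hval : ∀ i, e i (h' + t • u) = e i h' + t * e i u := by intro i; simp
  have hstep : ∀ i, |t * e i u| ≤ |z i - e i h'| := by
    intro i
    by_cases hi : e i u = 0
    · simp [hi]
    · have := hmin i hi
      rw [abs_div (z i - e i h'), le_div_iff₀ (abs_pos.2 hi), ← abs_mul] at this
      exact this
  have hgood' : good (h' + t • u) := by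
    constructor
    · intro i hi
      have h1 := hg.1 i hi
      have h2 := hstep i
      rw [abs_of_nonpos (by linarith : z i - e i h' ≤ 0)] at h2
      have := neg_abs_le (t * e i u)
      rw [hval]; linarith
    · intro i hi
      have h1 := hg.2 i hi
      have h2 := hstep i
      rw [abs_of_nonneg (by linarith : 0 ≤ z i - e i h')] at h2
      have := le_abs_self (t * e i u)
      rw [hval]; linarith
  have hss : tight h' ⊂ tight (h' + t • u) := by
    refine Finset.ssubset_iff_subset_ne.2 ⟨fun i hi => ?_, fun heq => ?_⟩
    · simp only [tight, Finset.mem_filter, Finset.mem_univ, true_and] at hi ⊢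
      rw [hval, hut i hi, hi]; ring
    · have : j ∈ tight h' := by
        rw [heq]
        simp only [tight, Finset.mem_filter, Finset.mem_univ, true_and]
        rw [hval, ht]; field_simp; ring
      exact hj (hut j (by simpa [tight] using this))
  exact absurd (hmax _ ⟨_, hgood', rfl⟩) (not_le.2 (Finset.card_lt_card hss))

/-- One-dimensional case of `exists_piece_crossing`. -/
lemma exists_piece_crossing_Icc {κ : Type*} [Finite κ] (φ : ℝ → ℝ)
    (hφ : ContinuousOn φ (Set.Icc 0 1)) (C : κ → Set ℝ) (hC : ∀ k, IsClosed (C k))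
    (hcov : ∀ t ∈ Set.Icc (0 : ℝ) 1, ∃ k, t ∈ C k) (u v : κ → ℝ)
    (hp : ∀ k, ∀ t ∈ C k, φ t = u k + t * v k) :
    ∃ k, u k ≤ φ 0 ∧ φ 1 ≤ u k + v k := by
  by_contra! hno
  obtain ⟨ε, hε, hεpos⟩ : ∃ ε : ℝ, (∀ k, u k ≤ φ 0 → u k + v k < φ 1 - ε) ∧ 0 < ε := by
    have hev : ∀ᶠ ε : ℝ in nhdsWithin 0 (Set.Ioi 0), ∀ k, u k ≤ φ 0 → u k + v k < φ 1 - ε := by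
      rw [Filter.eventually_all]
      intro k
      by_cases hk : u k ≤ φ 0
      · have : 0 < φ 1 - (u k + v k) := by linarith [hno k hk]
        filter_upwards [nhdsWithin_le_nhds (Iio_mem_nhds this)] with ε h1 _
        simp only [Set.mem_Iio] at h1
        linarith
      · exact Filter.Eventually.of_forall fun ε h => absurd h hk
    exact (hev.and self_mem_nhdsWithin).exists
  -- `c` is the chord of `φ`, lowered by `ε` at the right end; `t₀` is the last time `φ` is below it.
  let c : ℝ → ℝ := fun t => φ 0 + t * (φ 1 - ε - φ 0)
  have hc : Continuous c := by fun_prop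
  have hcl : IsClosed {t ∈ Set.Icc (0 : ℝ) 1 | φ t ≤ c t} :=
    isClosed_Icc.isClosed_le hφ hc.continuousOn
  obtain ⟨t₀, ⟨ht₀, hle⟩, hgr⟩ :=
    (isCompact_Icc.of_isClosed_subset hcl (fun t h => h.1)).exists_isGreatest
      ⟨0, by simp [c]⟩
  have ht₀1 : t₀ < 1 := by
    refine lt_of_le_of_ne ht₀.2 fun h => ?_
    subst h
    simp only [c] at hle
    linarith
  -- Slightly after `t₀` only pieces that are already active at `t₀` are active.
  have hev : ∀ᶠ t in nhdsWithin t₀ (Set.Ioi t₀), ∀ k, t ∈ C k → t₀ ∈ C k := by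
    rw [Filter.eventually_all]
    intro k
    by_cases hk : t₀ ∈ C k
    · exact Filter.Eventually.of_forall fun _ _ => hk
    · filter_upwards [nhdsWithin_le_nhds ((hC k).isOpen_compl.mem_nhds hk)] with t h1 h2
      exact absurd h2 h1
  obtain ⟨t, ⟨hact, ht1⟩, ht2⟩ := ((hev.and
    (nhdsWithin_le_nhds (Iio_mem_nhds ht₀1))).and self_mem_nhdsWithin).exists
  change t < 1 at ht1
  change t₀ < t at ht2
  have htI : t ∈ Set.Icc (0 : ℝ) 1 := ⟨by linarith [ht₀.1], ht1.le⟩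
  obtain ⟨k, hk⟩ := hcov t htI
  have hlt : c t < φ t := by
    by_contra! h
    exact absurd (hgr ⟨htI, h⟩) (not_le.2 ht2)
  rw [hp k t hk] at hlt
  rw [hp k t₀ (hact k hk)] at hle
  simp only [c] at hlt hle
  -- The piece `k` crosses `c` upwards in `[t₀, t]`, so it lies below `c` at `0` and above it at `1`.
  have hs : 0 < v k - (φ 1 - ε - φ 0) := by
    by_contra! h
    nlinarith
  have h0 : u k ≤ φ 0 := by nlinarith [ht₀.1]
  have h1 := hε k h0
  nlinarith

/-- For any two points `p`, `q` of a convex set on which `f` is piecewise affine, some piece lies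
weakly below `f` at `p` and weakly above `f` at `q`. This is the fact behind the max-min representation. -/
lemma exists_piece_crossing {E κ : Type*} [NormedAddCommGroup E] [InnerProductSpace ℝ E] [Finite κ]
    {D : Set E} (hD : Convex ℝ D) (f : E → ℝ) (hf : ContinuousOn f D)
    (C : κ → Set E) (hC : ∀ k, IsClosed (C k)) (hcov : ∀ y ∈ D, ∃ k, y ∈ C k)
    (a : κ → E) (b : κ → ℝ) (hp : ∀ k, ∀ y ∈ C k, f y = ⟪a k, y⟫ + b k)
    {p q : E} (hpD : p ∈ D) (hqD : q ∈ D) :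
    ∃ k, ⟪a k, p⟫ + b k ≤ f p ∧ f q ≤ ⟪a k, q⟫ + b k := by
  let γ : ℝ → E := fun t => p + t • (q - p)
  have hγ : Continuous γ := by fun_prop
  have hmaps : Set.MapsTo γ (Set.Icc 0 1) D := fun t ht =>
    hD.add_smul_sub_mem hpD hqD ht
  obtain ⟨k, h1, h2⟩ := exists_piece_crossing_Icc (f ∘ γ) (hf.comp hγ.continuousOn hmaps)
    (fun k => γ ⁻¹' C k) (fun k => (hC k).preimage hγ) (fun t ht => hcov _ (hmaps ht))
    (fun k => ⟪a k, p⟫ + b k) (fun k => ⟪a k, q - p⟫) (by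
      intro k t ht
      simp only [Function.comp, hp k _ ht, γ, inner_add_right, inner_smul_right]
      ring)
  refine ⟨k, by simpa [γ] using h1, ?_⟩
  simp only [Function.comp, γ, inner_sub_right] at h2
  simp only [one_smul, add_sub_cancel] at h2
  linarith

/-- Evaluation of the affine function `y ↦ ⟪a, y⟫ + b`, encoded as `(a, b)`, at the point `p`. -/
noncomputable def affineEval {E : Type*} [NormedAddCommGroup E] [InnerProductSpace ℝ E] (p : E) :
    E × ℝ →ₗ[ℝ] ℝ where
  toFun h := ⟪h.1, p⟫ + h.2
  map_add' h h' := by simp only [Prod.fst_add, Prod.snd_add, inner_add_left]; ring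
  map_smul' c h := by
    simp only [Prod.smul_fst, Prod.smul_snd, real_inner_smul_left, smul_eq_mul, RingHom.id_apply]
    ring

lemma affineEval_apply {E : Type*} [NormedAddCommGroup E] [InnerProductSpace ℝ E] (p : E)
    (h : E × ℝ) : affineEval p h = ⟪h.1, p⟫ + h.2 := rfl

/-- An affine function vanishing at points that affinely span the space is zero. -/
lemma eq_zero_of_affineEval {E ι : Type*} [NormedAddCommGroup E] [InnerProductSpace ℝ E]
    [Nonempty ι] (x : ι → E) (hx : vectorSpan ℝ (Set.range x) = ⊤)
    (h : E × ℝ) (h0 : ∀ i, affineEval (x i) h = 0) : h = 0 := by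
  simp only [affineEval_apply] at h0
  have hle : vectorSpan ℝ (Set.range x) ≤ LinearMap.ker (innerₛₗ ℝ h.1) := by
    rw [vectorSpan_def, Submodule.span_le]
    rintro _ ⟨_, ⟨i, rfl⟩, _, ⟨j, rfl⟩, rfl⟩
    simp only [vsub_eq_sub, SetLike.mem_coe, LinearMap.mem_ker, innerₛₗ_apply_apply,
      inner_sub_right]
    linarith [h0 i, h0 j]
  have ha : h.1 = 0 := by
    have hm : h.1 ∈ LinearMap.ker (innerₛₗ ℝ h.1) := hle (hx ▸ Submodule.mem_top)
    simpa using hm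
  obtain ⟨i⟩ := ‹Nonempty ι›
  have := h0 i
  simp only [ha, inner_zero_left, zero_add] at this
  exact Prod.ext ha this

/-- Every CPWL interpolation of the data set has a well-behaved version:
a CPWL interpolation with the same number of pieces in which each affine domain contains
the data points of the corresponding original domain and at least `d+1` data points. -/
theorem cpwl_interpolation_has_well_behaved_version
    (d N : ℕ) (hd : 1 ≤ d) (hN : d + 1 ≤ N)
    (x : Fin N → EuclideanSpace ℝ (Fin d)) (z : Fin N → ℝ)
    (hgen : ∀ s : Finset (Fin N), s.card = d + 1 →
      AffineIndependent ℝ (fun i : s => x i))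
    (P : ℕ)
    (f : EuclideanSpace ℝ (Fin d) → ℝ)
    (hcont : ContinuousOn f (convexHull ℝ (Set.range x)))
    (hinterp : ∀ i, f (x i) = z i)
    (Dk : Fin P → Set (EuclideanSpace ℝ (Fin d)))
    (hcompact : ∀ k, IsCompact (Dk k))
    (hsub : ∀ k, Dk k ⊆ convexHull ℝ (Set.range x))
    (hcover : ⋃ k, Dk k = convexHull ℝ (Set.range x))
    (a : Fin P → EuclideanSpace ℝ (Fin d)) (b : Fin P → ℝ)
    (hpiece : ∀ k, ∀ y ∈ Dk k, f y = ⟪a k, y⟫ + b k) :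
    ∃ (g : EuclideanSpace ℝ (Fin d) → ℝ)
      (Dk' : Fin P → Set (EuclideanSpace ℝ (Fin d)))
      (a' : Fin P → EuclideanSpace ℝ (Fin d)) (b' : Fin P → ℝ),
      ContinuousOn g (convexHull ℝ (Set.range x)) ∧
      (∀ i, g (x i) = z i) ∧
      (∀ k, IsCompact (Dk' k)) ∧
      (∀ k, Dk' k ⊆ convexHull ℝ (Set.range x)) ∧
      (⋃ k, Dk' k = convexHull ℝ (Set.range x)) ∧
      (∀ k, ∀ y ∈ Dk' k, g y = ⟪a' k, y⟫ + b' k) ∧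
      (∀ k, {i : Fin N | x i ∈ Dk k} ⊆ {i : Fin N | x i ∈ Dk' k}) ∧
      (∀ k, d + 1 ≤ Set.ncard {i : Fin N | x i ∈ Dk' k}) := by
  classical
  have hcov : ∀ y ∈ convexHull ℝ (Set.range x), ∃ k, y ∈ Dk k := fun y hy => by
    rw [← hcover] at hy
    simpa using hy
  have hxD : ∀ i, x i ∈ convexHull ℝ (Set.range x) := fun i =>
    subset_convexHull ℝ _ (Set.mem_range_self i)
  have hcompactD : IsCompact (convexHull ℝ (Set.range x)) :=
    hcover ▸ isCompact_iUnion hcompact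
  have : Nonempty (Fin N) := ⟨⟨0, by omega⟩⟩
  have hspan : vectorSpan ℝ (Set.range x) = ⊤ := by
    obtain ⟨s, -, hs⟩ := Finset.exists_subset_card_eq
      (s := (Finset.univ : Finset (Fin N))) (n := d + 1) (by simpa using hN)
    have hsp := (hgen s hs).vectorSpan_eq_top_of_card_eq_finrank_add_one (by simp [hs])
    refine top_le_iff.1 (hsp ▸ vectorSpan_mono ℝ ?_)
    rintro _ ⟨i, rfl⟩
    exact ⟨i, rfl⟩
  choose G hGge hGle hGcard using fun k => exists_vertex (fun i => affineEval (x i))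
    (eq_zero_of_affineEval x hspan) z (a k, b k)
  simp only [affineEval_apply] at hGge hGle hGcard
  have hfin : Module.finrank ℝ (EuclideanSpace ℝ (Fin d) × ℝ) = d + 1 := by simp
  rw [hfin] at hGcard
  let S : EuclideanSpace ℝ (Fin d) → Finset (Fin P) := fun q =>
    Finset.univ.filter (fun k => f q ≤ ⟪a k, q⟫ + b k)
  -- The maximum runs over the finitely many distinct sets `S q`.
  let 𝒯 : Type := {T : Finset (Fin P) // ∃ q ∈ convexHull ℝ (Set.range x), S q = T}
  have hne : ∀ T : 𝒯, T.1.Nonempty := by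
    rintro ⟨_, q, hq, rfl⟩
    obtain ⟨k, hk⟩ := hcov q hq
    exact ⟨k, by simp [S, hpiece k q hk]⟩
  have : Nonempty 𝒯 := ⟨⟨_, x ⟨0, by omega⟩, hxD _, rfl⟩⟩
  let g : EuclideanSpace ℝ (Fin d) → ℝ := fun y =>
    (Finset.univ : Finset 𝒯).sup' Finset.univ_nonempty
      (fun T => T.1.inf' (hne T) (fun k => ⟪(G k).1, y⟫ + (G k).2))
  have hg : Continuous g := by
    refine Continuous.finset_sup'_apply _ fun T _ => Continuous.finset_inf'_apply _ fun k _ => ?_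
    fun_prop
  have hgz : ∀ i, g (x i) = z i := by
    intro i
    apply le_antisymm
    · refine Finset.sup'_le _ _ ?_
      rintro ⟨_, q, hq, rfl⟩ -
      obtain ⟨k, h1, h2⟩ := exists_piece_crossing (convex_convexHull ℝ _) f hcont Dk
        (fun k => (hcompact k).isClosed) hcov a b hpiece (hxD i) hq
      rw [hinterp] at h1
      exact (Finset.inf'_le _ (by simp [S, h2])).trans (hGle k i h1)
    · refine le_trans ?_ (Finset.le_sup' _ (Finset.mem_univ (⟨_, x i, hxD i, rfl⟩ : 𝒯)))
      refine Finset.le_inf' _ _ fun k hk => hGge k i ?_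
      simpa [S, hinterp] using hk
  refine ⟨g, fun k => {y ∈ convexHull ℝ (Set.range x) | g y = ⟪(G k).1, y⟫ + (G k).2},
    fun k => (G k).1, fun k => (G k).2, hg.continuousOn, hgz, fun k => ?_, fun k y hy => hy.1,
    ?_, fun k y hy => hy.2, fun k i hi => ?_, fun k => ?_⟩
  · refine hcompactD.inter_right (isClosed_eq hg ?_)
    fun_prop
  · refine Set.Subset.antisymm (Set.iUnion_subset fun k y hy => hy.1) fun y hy => ?_
    obtain ⟨T, -, hT⟩ := Finset.exists_mem_eq_sup' (Finset.univ_nonempty (α := 𝒯))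
      (fun T => T.1.inf' (hne T) (fun k => ⟪(G k).1, y⟫ + (G k).2))
    obtain ⟨k, -, hk⟩ := Finset.exists_mem_eq_inf' (hne T) (fun k => ⟪(G k).1, y⟫ + (G k).2)
    exact Set.mem_iUnion.2 ⟨k, hy, hT.trans hk⟩
  · have hfz : ⟪a k, x i⟫ + b k = z i := by rw [← hpiece k _ hi, hinterp]
    exact ⟨hxD i, (hgz i).trans (le_antisymm (hGge k i hfz.ge) (hGle k i hfz.le))⟩
  · refine (hGcard k).trans (Set.ncard_le_ncard (fun i hi => ?_) (Set.toFinite _))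
    exact ⟨hxD i, (hgz i).trans hi.symm⟩
end

section
/- Let ε ≥ 0 and let f : D → ℝ be continuous with |f(x_i) − z_i| ≤ ε for all i = 1, …, N, and suppose there exist compact sets D_1, …, D_P ⊆ D with D_1 ∪ … ∪ D_P = D and affine functions f_1, …, f_P : ℝ^d → ℝ such that f(x) = f_k(x) for all x ∈ D_k and all k. Then there exists a continuous function g : D → ℝ together with compact sets D'_1, …, D'_P ⊆ D with D'_1 ∪ … ∪ D'_P = D and affine functions g_1, …, g_P : ℝ^d → ℝ with g(x) = g_k(x) for all x ∈ D'_k, such that g(x_i) = f(x_i) for all i = 1, …, N, and for every k = 1, …, P: {i : x_i ∈ D_k} ⊆ {i : x_i ∈ D'_k} and the set {i : x_i ∈ D'_k} has at least d+1 elements. -/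
/-!
Each affine piece is moved separately, without changing the function at the data points.

Write `v i = f (x i)` and let `u k` be the affine pieces of `f`. On the segment from `x j` to `x l`
the function is continuous and piecewise affine in one variable, so some piece satisfies
`v j ≤ u k (x j)` and `u k (x l) ≤ v l` (`exists_piece_segment`). Consequently the lattice polynomial
`max_j min {u k | v j ≤ u k (x j)}` takes the value `v l` at each data point `x l`.

The value of this polynomial at `x l` only depends on the weak signs of `u k (x l) - v l`: any
affine functions `u' k` for which `v l ≤ u k (x l)` implies `v l ≤ u' k (x l)`, and likewise for
`≥`, give a polynomial with the same values at the data points. Such `u' k` interpolating at least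
`d + 1` data points exist by general position (`exists_affine_interpolating`): as long as at most
`d` data points are interpolated, `u k` can be moved in the direction of an affine function
vanishing at those points until it first meets a further data value.

The required function is `g = max_j min {u' k | v j ≤ u k (x j)}` with domains `{g = u' k}`.
-/

open scoped RealInnerProductSpace
open Set Filter Topology

/-- A continuous piecewise affine function on `[0, 1]` has a piece `t ↦ p k + t * q k` lying weakly
above it at `0` and weakly below it at `1`. -/
lemma exists_piece_segment {P : ℕ} (ψ : ℝ → ℝ) (hψ : ContinuousOn ψ (Icc 0 1))
    (K : Fin P → Set ℝ) (hK : ∀ k, IsClosed (K k)) (hcov : ∀ t ∈ Icc (0 : ℝ) 1, ∃ k, t ∈ K k)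
    (p q : Fin P → ℝ) (h : ∀ k, ∀ t ∈ K k, ψ t = p k + t * q k) :
    ∃ k, ψ 0 ≤ p k ∧ p k + q k ≤ ψ 1 := by
  by_contra! hcon
  obtain ⟨c, hc, hc0⟩ : ∃ c : ℝ, (∀ k, ψ 0 ≤ p k → ψ 1 + c ≤ p k + q k) ∧ 0 < c := by
    have h1 : ∀ᶠ c in 𝓝[>] (0 : ℝ), ∀ k, ψ 0 ≤ p k → ψ 1 + c ≤ p k + q k := by
      refine eventually_all.2 fun k => ?_
      by_cases hk : ψ 0 ≤ p k
      · have h2 := hcon k hk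
        have h3 : ∀ᶠ c in 𝓝[>] (0 : ℝ), c < p k + q k - ψ 1 :=
          nhdsWithin_le_nhds (eventually_lt_nhds (by linarith))
        filter_upwards [h3] with c hc _
        linarith
      · exact Eventually.of_forall fun c h => absurd h hk
    exact (h1.and self_mem_nhdsWithin).exists
  -- Continuous induction: `ψ` stays above the line from `(0, ψ 0)` to `(1, ψ 1 + c)`.
  have key : Icc (0 : ℝ) 1 ⊆ {t | ψ 0 + t * (ψ 1 - ψ 0 + c) ≤ ψ t} := by
    apply IsClosed.Icc_subset_of_forall_mem_nhdsWithin
    · have : {t | ψ 0 + t * (ψ 1 - ψ 0 + c) ≤ ψ t} ∩ Icc 0 1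
          = {t ∈ Icc (0 : ℝ) 1 | ψ 0 + t * (ψ 1 - ψ 0 + c) ≤ ψ t} := by
        ext t; simp [and_comm]
      rw [this]
      exact isClosed_Icc.isClosed_le (by fun_prop) hψ
    · simp
    · rintro τ ⟨hτ, hτ0, hτ1⟩
      -- Pieces active close to `τ` are active at `τ`.
      have hact : ∀ᶠ t in 𝓝[>] τ, ∀ k, t ∈ K k → τ ∈ K k := by
        refine eventually_all.2 fun k => ?_
        by_cases hk : τ ∈ K k
        · exact Eventually.of_forall fun _ _ => hk
        · filter_upwards [nhdsWithin_le_nhds ((hK k).isOpen_compl.mem_nhds hk)] with t ht ht'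
          exact absurd ht' ht
      have hlt : ∀ᶠ t in 𝓝[>] τ, t < 1 := nhdsWithin_le_nhds (eventually_lt_nhds hτ1)
      filter_upwards [hact, hlt, self_mem_nhdsWithin] with t ht ht1 htτ
      have htτ : τ < t := htτ
      obtain ⟨k, hk⟩ := hcov t ⟨by linarith, ht1.le⟩
      have e1 := h k t hk
      have e2 := h k τ (ht k hk)
      simp only [mem_ofPred_eq] at hτ ⊢
      rw [e1]
      rw [e2] at hτ
      by_cases hp : ψ 0 ≤ p k
      · have := hc k hp
        nlinarith
      · push Not at hp
        -- The piece is below the line at `0` and above it at `τ`, hence steeper than it.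
        have hτ' : 0 < τ := by
          rcases hτ0.eq_or_lt with h0 | h0
          · subst h0; linarith
          · exact h0
        have : ψ 1 - ψ 0 + c < q k := by
          by_contra! hq
          nlinarith
        nlinarith
  have := key (right_mem_Icc.2 zero_le_one)
  simp only [mem_ofPred_eq] at this
  linarith

/-- Given at most `d` of the data points, some affine function vanishes at each of them but not at
all data points. -/
lemma exists_affine_vanishing {d N : ℕ} (hN : d + 1 ≤ N)
    (x : Fin N → EuclideanSpace ℝ (Fin d))
    (hgen : ∀ s : Finset (Fin N), s.card = d + 1 → AffineIndependent ℝ (fun i : s => x i))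
    (I : Finset (Fin N)) (hI : I.card ≤ d) :
    ∃ (a : EuclideanSpace ℝ (Fin d)) (b : ℝ),
      (∀ i ∈ I, ⟪a, x i⟫ + b = 0) ∧ ∃ j, ⟪a, x j⟫ + b ≠ 0 := by
  obtain ⟨J, hIJ, hJ⟩ := Finset.exists_superset_card_eq (s := I) (n := d + 1) (by omega)
    (by simpa using hN)
  obtain ⟨j, hjJ, hjI⟩ := Finset.exists_mem_notMem_of_card_lt_card (s := I) (t := J) (by omega)
  have hind := hgen J hJ
  have htop : affineSpan ℝ (Set.range fun i : J => x i) = ⊤ := by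
    rw [hind.affineSpan_eq_top_iff_card_eq_finrank_add_one]
    simp [hJ]
  let B : AffineBasis J ℝ (EuclideanSpace ℝ (Fin d)) := ⟨fun i : J => x i, hind, htop⟩
  obtain ⟨φ, hφj, hφi⟩ : ∃ φ : EuclideanSpace ℝ (Fin d) →ᵃ[ℝ] ℝ,
      φ (x j) = 1 ∧ ∀ i : J, ⟨j, hjJ⟩ ≠ i → φ (x i) = 0 :=
    ⟨B.coord ⟨j, hjJ⟩, B.coord_apply_eq ⟨j, hjJ⟩, fun i hi => B.coord_apply_ne hi⟩
  obtain ⟨α, hα⟩ : ∃ α : EuclideanSpace ℝ (Fin d), ∀ y, ⟪α, y⟫ + φ 0 = φ y := by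
    refine ⟨(InnerProductSpace.toDual ℝ _).symm (LinearMap.toContinuousLinearMap φ.linear),
      fun y => ?_⟩
    rw [InnerProductSpace.toDual_symm_apply]
    have := congrFun φ.decomp y
    simp only [Pi.add_apply] at this
    rw [this]
    simp
  refine ⟨α, φ 0, fun i hi => ?_, j, ?_⟩
  · rw [hα]
    refine hφi ⟨i, hIJ hi⟩ fun h => ?_
    have : j = i := congrArg Subtype.val h
    exact hjI (this ▸ hi)
  · rw [hα, hφj]
    exact one_ne_zero

/-- An affine function can be moved, without strictly crossing any of the values `v i`, to one
attaining at least `d + 1` of them. -/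
lemma exists_affine_interpolating {d N : ℕ} (hN : d + 1 ≤ N)
    (x : Fin N → EuclideanSpace ℝ (Fin d))
    (hgen : ∀ s : Finset (Fin N), s.card = d + 1 → AffineIndependent ℝ (fun i : s => x i))
    (v : Fin N → ℝ) (a : EuclideanSpace ℝ (Fin d)) (b : ℝ) :
    ∃ (a' : EuclideanSpace ℝ (Fin d)) (b' : ℝ),
      (∀ i, v i ≤ ⟪a, x i⟫ + b → v i ≤ ⟪a', x i⟫ + b') ∧
      (∀ i, ⟪a, x i⟫ + b ≤ v i → ⟪a', x i⟫ + b' ≤ v i) ∧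
      d + 1 ≤ (Finset.univ.filter fun i => ⟪a', x i⟫ + b' = v i).card := by
  suffices H : ∀ m ≤ d + 1, ∃ (a' : EuclideanSpace ℝ (Fin d)) (b' : ℝ),
      (∀ i, v i ≤ ⟪a, x i⟫ + b → v i ≤ ⟪a', x i⟫ + b') ∧
      (∀ i, ⟪a, x i⟫ + b ≤ v i → ⟪a', x i⟫ + b' ≤ v i) ∧
      m ≤ (Finset.univ.filter fun i => ⟪a', x i⟫ + b' = v i).card from H _ le_rfl
  intro m
  induction m with
  | zero => exact fun _ => ⟨a, b, fun _ h => h, fun _ h => h, Nat.zero_le _⟩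
  | succ m ih =>
    intro hm
    obtain ⟨a₁, b₁, hlo, hhi, hcard⟩ := ih (by omega)
    set I := Finset.univ.filter fun i => ⟪a₁, x i⟫ + b₁ = v i with hI
    by_cases hbig : m + 1 ≤ I.card
    · exact ⟨a₁, b₁, hlo, hhi, hbig⟩
    obtain ⟨α, β, hvan, j₀, hj₀⟩ := exists_affine_vanishing hN x hgen I (by omega)
    -- Among the times at which `u + t h` meets a data value, take one of least absolute value.
    obtain ⟨j, hj, hmin⟩ := Finset.exists_min_image
      (Finset.univ.filter fun i => ⟪α, x i⟫ + β ≠ 0)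
      (fun i => |(v i - (⟪a₁, x i⟫ + b₁)) / (⟪α, x i⟫ + β)|) ⟨j₀, by simpa using hj₀⟩
    replace hj : ⟪α, x j⟫ + β ≠ 0 := by simpa using hj
    set t := (v j - (⟪a₁, x j⟫ + b₁)) / (⟪α, x j⟫ + β) with ht
    have hval : ∀ i, ⟪a₁ + t • α, x i⟫ + (b₁ + t * β)
        = (⟪a₁, x i⟫ + b₁) + t * (⟪α, x i⟫ + β) := by
      intro i
      rw [inner_add_left, real_inner_smul_left]
      ring
    have hle : ∀ i, |t * (⟪α, x i⟫ + β)| ≤ |v i - (⟪a₁, x i⟫ + b₁)| := by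
      intro i
      by_cases hi : ⟪α, x i⟫ + β = 0
      · simp [hi]
      · have := hmin i (by simpa using hi)
        rw [abs_div (v i - _), le_div_iff₀ (abs_pos.2 hi)] at this
        rwa [abs_mul]
    refine ⟨a₁ + t • α, b₁ + t * β, fun i hi => ?_, fun i hi => ?_, ?_⟩
    · have h1 := hlo i hi
      have h2 := hle i
      rw [hval, abs_of_nonpos (by linarith : v i - (⟪a₁, x i⟫ + b₁) ≤ 0)] at *
      have := (abs_le.1 h2).1
      linarith
    · have h1 := hhi i hi
      have h2 := hle i
      rw [hval, abs_of_nonneg (by linarith : 0 ≤ v i - (⟪a₁, x i⟫ + b₁))] at *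
      have := (abs_le.1 h2).2
      linarith
    · have hjI : j ∉ I := fun h => hj (hvan j h)
      calc m + 1 ≤ (insert j I).card := by rw [Finset.card_insert_of_notMem hjI]; omega
        _ ≤ _ := by
          apply Finset.card_le_card
          intro i hi
          rw [Finset.mem_filter, hval]
          refine ⟨Finset.mem_univ _, ?_⟩
          rcases Finset.mem_insert.1 hi with rfl | hi
          · rw [ht, div_mul_cancel₀ _ hj]
            ring
          · rw [hvan i hi, mul_zero, add_zero]
            exact (Finset.mem_filter.1 hi).2

/-- Every CPWL ε-approximation of the data set has a well-behaved
version: an equivalent CPWL function (same values at the data points) with the same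
number of pieces, whose affine domains contain the data points of the corresponding
original domains and each contain at least `d+1` data points. -/
theorem cpwl_approximation_has_well_behaved_version
    (d N : ℕ) (hd : 1 ≤ d) (hN : d + 1 ≤ N)
    (x : Fin N → EuclideanSpace ℝ (Fin d)) (z : Fin N → ℝ)
    (hgen : ∀ s : Finset (Fin N), s.card = d + 1 →
      AffineIndependent ℝ (fun i : s => x i))
    (ε : ℝ) (hε : 0 ≤ ε)
    (P : ℕ)
    (f : EuclideanSpace ℝ (Fin d) → ℝ)
    (hcont : ContinuousOn f (convexHull ℝ (Set.range x)))
    (happrox : ∀ i, |f (x i) - z i| ≤ ε)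
    (Dk : Fin P → Set (EuclideanSpace ℝ (Fin d)))
    (hcompact : ∀ k, IsCompact (Dk k))
    (hsub : ∀ k, Dk k ⊆ convexHull ℝ (Set.range x))
    (hcover : ⋃ k, Dk k = convexHull ℝ (Set.range x))
    (a : Fin P → EuclideanSpace ℝ (Fin d)) (b : Fin P → ℝ)
    (hpiece : ∀ k, ∀ y ∈ Dk k, f y = ⟪a k, y⟫ + b k) :
    ∃ (g : EuclideanSpace ℝ (Fin d) → ℝ)
      (Dk' : Fin P → Set (EuclideanSpace ℝ (Fin d)))
      (a' : Fin P → EuclideanSpace ℝ (Fin d)) (b' : Fin P → ℝ),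
      ContinuousOn g (convexHull ℝ (Set.range x)) ∧
      (∀ k, IsCompact (Dk' k)) ∧
      (∀ k, Dk' k ⊆ convexHull ℝ (Set.range x)) ∧
      (⋃ k, Dk' k = convexHull ℝ (Set.range x)) ∧
      (∀ k, ∀ y ∈ Dk' k, g y = ⟪a' k, y⟫ + b' k) ∧
      (∀ i, g (x i) = f (x i)) ∧
      (∀ k, {i : Fin N | x i ∈ Dk k} ⊆ {i : Fin N | x i ∈ Dk' k}) ∧
      (∀ k, d + 1 ≤ Set.ncard {i : Fin N | x i ∈ Dk' k}) := by
  classical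
  have hxD : ∀ i, x i ∈ convexHull ℝ (Set.range x) := fun i => subset_convexHull ℝ _ ⟨i, rfl⟩
  have hmem : ∀ y ∈ convexHull ℝ (Set.range x), ∃ k, y ∈ Dk k := by
    intro y hy
    rw [← hcover] at hy
    exact mem_iUnion.1 hy
  have hsep : ∀ j l, ∃ k, f (x j) ≤ ⟪a k, x j⟫ + b k ∧ ⟪a k, x l⟫ + b k ≤ f (x l) := by
    intro j l
    have hw : Continuous fun t : ℝ => x j + t • (x l - x j) := by fun_prop
    have hmaps : ∀ t ∈ Icc (0 : ℝ) 1, x j + t • (x l - x j) ∈ convexHull ℝ (Set.range x) :=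
      fun t ht => (convex_convexHull ℝ _).add_smul_sub_mem (hxD j) (hxD l) ht
    obtain ⟨k, h0, h1⟩ := exists_piece_segment (fun t => f (x j + t • (x l - x j)))
      (hcont.comp hw.continuousOn hmaps)
      (fun k => (fun t : ℝ => x j + t • (x l - x j)) ⁻¹' Dk k)
      (fun k => (hcompact k).isClosed.preimage hw)
      (fun t ht => hmem _ (hmaps t ht))
      (fun k => ⟪a k, x j⟫ + b k) (fun k => ⟪a k, x l - x j⟫)
      (fun k t ht => by
        rw [hpiece k _ ht, inner_add_right, real_inner_smul_right]
        ring)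
    refine ⟨k, by simpa using h0, ?_⟩
    simp only [one_smul, add_sub_cancel, inner_sub_right] at h1
    linarith
  choose a' b' hlo hhi hcard using fun k =>
    exists_affine_interpolating hN x hgen (fun i => f (x i)) (a k) (b k)
  let S : Fin N → Finset (Fin P) := fun j =>
    Finset.univ.filter fun k => f (x j) ≤ ⟪a k, x j⟫ + b k
  have hS : ∀ j, (S j).Nonempty := fun j => by
    obtain ⟨k, hk, -⟩ := hsep j j
    exact ⟨k, by simpa [S] using hk⟩
  have hne : (Finset.univ : Finset (Fin N)).Nonempty := ⟨⟨0, by omega⟩, Finset.mem_univ _⟩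
  let g : EuclideanSpace ℝ (Fin d) → ℝ := fun y =>
    Finset.univ.sup' hne fun j => (S j).inf' (hS j) fun k => ⟪a' k, y⟫ + b' k
  have hg : Continuous g := by
    refine Continuous.finset_sup'_apply hne fun j _ => ?_
    exact Continuous.finset_inf'_apply (hS j) fun k _ => by fun_prop
  have hgk : ∀ y, ∃ k, g y = ⟪a' k, y⟫ + b' k := by
    intro y
    obtain ⟨j, -, hj⟩ := Finset.exists_mem_eq_sup' hne
      fun j => (S j).inf' (hS j) fun k => ⟪a' k, y⟫ + b' k
    obtain ⟨k, -, hk⟩ := Finset.exists_mem_eq_inf' (hS j) fun k => ⟪a' k, y⟫ + b' k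
    exact ⟨k, hj.trans hk⟩
  have hgx : ∀ i, g (x i) = f (x i) := by
    intro i
    apply le_antisymm
    · refine Finset.sup'_le _ _ fun j _ => ?_
      obtain ⟨k, h1, h2⟩ := hsep j i
      exact (Finset.inf'_le _ (by simpa [S] using h1)).trans (hhi k i h2)
    · refine le_trans ?_ (Finset.le_sup' _ (Finset.mem_univ i))
      exact Finset.le_inf' _ _ fun k hk => hlo k i (by simpa [S] using hk)
  refine ⟨g, fun k => convexHull ℝ (Set.range x) ∩ {y | g y = ⟪a' k, y⟫ + b' k}, a', b',
    hg.continuousOn, fun k => ?_, fun k => inter_subset_left, ?_, fun k y hy => hy.2, hgx,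
    fun k i hi => ?_, fun k => ?_⟩
  · exact ((Set.finite_range x).isCompact_convexHull ℝ).inter_right
      (isClosed_eq hg (by fun_prop))
  · rw [← inter_iUnion]
    refine inter_eq_left.2 fun y _ => mem_iUnion.2 (hgk y)
  · have hik : f (x i) = ⟪a k, x i⟫ + b k := hpiece k _ hi
    refine ⟨hxD i, ?_⟩
    rw [mem_ofPred_eq, hgx]
    exact le_antisymm (hlo k i hik.le) (hhi k i hik.ge)
  · refine (hcard k).trans ?_
    rw [← Set.ncard_coe_finset]
    refine Set.ncard_le_ncard (fun i hi => ⟨hxD i, ?_⟩) (Set.toFinite _)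
    rw [mem_ofPred_eq, hgx]
    exact (Finset.mem_filter.1 (Finset.mem_coe.1 hi)).2.symm
end

section
/- Let ε ≥ 0 and let f : D → ℝ have a DC representation with P⁺, P⁻ ≥ 1 pieces such that f is a well-behaved ε-approximation of S. Let (j, k) ∈ {1,…,P⁺} × {1,…,P⁻} be such that D_j⁺ ∩ D_k⁻ has nonempty interior in ℝ^d, and let x ∈ D. Then min_{g ∈ A*_ε(S)} g(x) ≤ (a_j⁺ − a_k⁻)·x + (b_j⁺ − b_k⁻) ≤ max_{g ∈ A*_ε(S)} g(x). -/
/-! The affine piece `h = f_j⁺ - f_k⁻` agrees with `f` at `d + 1` data points, hence is within `ε`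
of the data there. By general position these points form an affine basis, so `h y` is the
combination `∑ w k * h (x (ι k))` with the barycentric weights `w` of `y`, which may be negative.
Moving each node value to `z (ι k) ± ε`, with the sign chosen according to the sign of `w k`,
increases (or decreases) this sum; the affine function with the new node values exists and belongs
to `Astar`. Since a member of `Astar` is determined at `y` by its nodes and signs, `Astar` takes
finitely many values at `y`, so `AstarSup` and `AstarInf` are genuine bounds. -/

open scoped RealInnerProductSpace

noncomputable section

/-- Value at `y` of the affine function `y ↦ ⟪a, y⟫ + b` on `ℝ^d`. -/
def affEval {d : ℕ} (a : EuclideanSpace ℝ (Fin d)) (b : ℝ)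
    (y : EuclideanSpace ℝ (Fin d)) : ℝ :=
  ⟪a, y⟫ + b

/-- Pointwise maximum of the `P` affine functions `y ↦ ⟪a j, y⟫ + b j`. -/
def cpwlMax {d P : ℕ} (a : Fin P → EuclideanSpace ℝ (Fin d)) (b : Fin P → ℝ)
    (y : EuclideanSpace ℝ (Fin d)) : ℝ :=
  ⨆ j, affEval (a j) (b j) y

/-- Affine domain (inside `D`) of the `j`-th piece of `y ↦ max_k (⟪a k, y⟫ + b k)`. -/
def affDom {d P : ℕ} (D : Set (EuclideanSpace ℝ (Fin d)))
    (a : Fin P → EuclideanSpace ℝ (Fin d)) (b : Fin P → ℝ) (j : Fin P) :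
    Set (EuclideanSpace ℝ (Fin d)) :=
  {y ∈ D | cpwlMax a b y = affEval (a j) (b j) y}

/-- `A*_ε(S)`: the set of affine functions (coded as coefficient/bias pairs `(a, b)`)
interpolating some `d+1` of the data points with values perturbed by signs `±ε`. -/
def Astar {d N : ℕ} (x : Fin N → EuclideanSpace ℝ (Fin d)) (z : Fin N → ℝ) (ε : ℝ) :
    Set (EuclideanSpace ℝ (Fin d) × ℝ) :=
  {p | ∃ ι : Fin (d + 1) → Fin N, StrictMono ι ∧
    ∃ e : Fin (d + 1) → ℝ, (∀ k, e k = -ε ∨ e k = ε) ∧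
      ∀ k, affEval p.1 p.2 (x (ι k)) = z (ι k) + e k}

/-- `max_{g ∈ A*_ε(S)} g(y)`. -/
def AstarSup {d N : ℕ} (x : Fin N → EuclideanSpace ℝ (Fin d)) (z : Fin N → ℝ) (ε : ℝ)
    (y : EuclideanSpace ℝ (Fin d)) : ℝ :=
  sSup ((fun p => affEval p.1 p.2 y) '' Astar x z ε)

/-- `min_{g ∈ A*_ε(S)} g(y)`. -/
def AstarInf {d N : ℕ} (x : Fin N → EuclideanSpace ℝ (Fin d)) (z : Fin N → ℝ) (ε : ℝ)
    (y : EuclideanSpace ℝ (Fin d)) : ℝ :=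
  sInf ((fun p => affEval p.1 p.2 y) '' Astar x z ε)

/-- In general position, `d + 1` distinct data points form an affine basis. -/
lemma exists_affineBasis {d N : ℕ} {x : Fin N → EuclideanSpace ℝ (Fin d)}
    (hgen : ∀ s : Finset (Fin N), s.card = d + 1 → AffineIndependent ℝ (fun i : s => x i))
    {ι : Fin (d + 1) → Fin N} (hι : StrictMono ι) :
    ∃ B : AffineBasis (Fin (d + 1)) ℝ (EuclideanSpace ℝ (Fin d)), ∀ k, B k = x (ι k) := by
  have hs := hgen (Finset.univ.image ι)
    (by rw [Finset.card_image_of_injective _ hι.injective]; simp)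
  let emb : Fin (d + 1) ↪ (Finset.univ.image ι : Finset (Fin N)) :=
    ⟨fun k => ⟨ι k, Finset.mem_image_of_mem ι (Finset.mem_univ k)⟩,
      fun a b h => hι.injective (congrArg Subtype.val h)⟩
  have hind : AffineIndependent ℝ (fun k => x (ι k)) := hs.comp_embedding emb
  have hcard : Fintype.card (Fin (d + 1)) =
      Module.finrank ℝ (EuclideanSpace ℝ (Fin d)) + 1 := by
    rw [finrank_euclideanSpace_fin, Fintype.card_fin]
  have htop := hind.affineSpan_eq_top_iff_card_eq_finrank_add_one.2 hcard
  exact ⟨AffineBasis.mk (fun k => x (ι k)) hind htop, fun _ => rfl⟩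

lemma exists_affEval_eq {d : ℕ} (B : AffineBasis (Fin (d + 1)) ℝ (EuclideanSpace ℝ (Fin d)))
    (c : Fin (d + 1) → ℝ) :
    ∃ p : EuclideanSpace ℝ (Fin d) × ℝ, ∀ k, affEval p.1 p.2 (B k) = c k := by
  let g : EuclideanSpace ℝ (Fin d) →ᵃ[ℝ] ℝ := ∑ i, c i • B.coord i
  refine ⟨((InnerProductSpace.toDual ℝ (EuclideanSpace ℝ (Fin d))).symm
    (LinearMap.toContinuousLinearMap g.linear), g 0), fun k => ?_⟩
  have h : g (B k) = g.linear (B k) + g 0 := by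
    simpa using g.map_vadd 0 (B k)
  have hg : g (B k) = c k := by
    have : g (B k) = ∑ i, c i * B.coord i (B k) := by
      simp only [g]
      induction (Finset.univ : Finset (Fin (d + 1))) using Finset.induction_on with
      | empty => simp
      | insert a s ha ih => simp [Finset.sum_insert ha, ih]
    rw [this]
    simp [AffineBasis.coord_apply]
  simp only [affEval, InnerProductSpace.toDual_symm_apply]
  rw [← hg, h]
  rfl

/-- Affine functions commute with barycentric combinations. -/
lemma affEval_eq_sum_coord {d : ℕ}
    (B : AffineBasis (Fin (d + 1)) ℝ (EuclideanSpace ℝ (Fin d)))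
    (a : EuclideanSpace ℝ (Fin d)) (b : ℝ) (y : EuclideanSpace ℝ (Fin d)) :
    affEval a b y = ∑ k, B.coord k y * affEval a b (B k) := by
  simp only [affEval, mul_add, Finset.sum_add_distrib, ← Finset.sum_mul,
    B.sum_coord_apply_eq_one y, one_mul]
  congr 1
  have h := congrArg (fun v => ⟪a, v⟫) (B.linear_combination_coord_eq_self y)
  simp only [inner_sum, inner_smul_right] at h
  exact h.symm

lemma finite_Astar_values {d N : ℕ} {x : Fin N → EuclideanSpace ℝ (Fin d)}
    (hgen : ∀ s : Finset (Fin N), s.card = d + 1 → AffineIndependent ℝ (fun i : s => x i))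
    (z : Fin N → ℝ) (ε : ℝ) (y : EuclideanSpace ℝ (Fin d)) :
    ((fun p => affEval p.1 p.2 y) '' Astar x z ε).Finite := by
  classical
  choose B hB using fun ι : {ι : Fin (d + 1) → Fin N // StrictMono ι} =>
    exists_affineBasis hgen ι.2
  -- The value at `y` depends only on the nodes `ι` and the pattern of signs.
  refine (Set.finite_range
    (fun q : {ι : Fin (d + 1) → Fin N // StrictMono ι} × (Fin (d + 1) → Bool) =>
      ∑ k, (B q.1).coord k y * (z (q.1.1 k) + if q.2 k then ε else -ε))).subset ?_
  rintro _ ⟨p, ⟨ι, hι, e, he, hp⟩, rfl⟩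
  refine ⟨(⟨ι, hι⟩, fun k => decide (e k = ε)), ?_⟩
  simp only
  rw [affEval_eq_sum_coord (B ⟨ι, hι⟩)]
  refine Finset.sum_congr rfl fun k _ => ?_
  rw [hB, hp]
  by_cases h : e k = ε
  · simp [h]
  · have hk := (he k).resolve_right h
    simp only [h, decide_false, Bool.false_eq_true, if_false]
    rw [hk]

/-- For a well-behaved ε-approximation given by a DC representation and a
pair `(j,k)` whose affine domains intersect with nonempty interior, the affine piece
`f_j⁺ − f_k⁻` is bounded at every `x ∈ D` by the extrema of `A*_ε(S)` at `x`. -/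
theorem affine_piece_between_Astar_extrema
    (d N : ℕ) (hd : 1 ≤ d) (hN : d + 1 ≤ N)
    (x : Fin N → EuclideanSpace ℝ (Fin d)) (z : Fin N → ℝ)
    (hgen : ∀ s : Finset (Fin N), s.card = d + 1 →
      AffineIndependent ℝ (fun i : s => x i))
    (ε : ℝ) (hε : 0 ≤ ε)
    (Pp Pm : ℕ) (hPp : 0 < Pp) (hPm : 0 < Pm)
    (ap : Fin Pp → EuclideanSpace ℝ (Fin d)) (bp : Fin Pp → ℝ)
    (am : Fin Pm → EuclideanSpace ℝ (Fin d)) (bm : Fin Pm → ℝ)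
    (f : EuclideanSpace ℝ (Fin d) → ℝ)
    (hf : ∀ y ∈ convexHull ℝ (Set.range x),
      f y = cpwlMax ap bp y - cpwlMax am bm y)
    (happrox : ∀ i, |f (x i) - z i| ≤ ε)
    (hwb : ∀ (j : Fin Pp) (k : Fin Pm),
      (interior (affDom (convexHull ℝ (Set.range x)) ap bp j ∩
        affDom (convexHull ℝ (Set.range x)) am bm k)).Nonempty →
      d + 1 ≤ Set.ncard {i : Fin N | x i ∈
        affDom (convexHull ℝ (Set.range x)) ap bp j ∩
        affDom (convexHull ℝ (Set.range x)) am bm k})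
    (j : Fin Pp) (k : Fin Pm)
    (hjk : (interior (affDom (convexHull ℝ (Set.range x)) ap bp j ∩
      affDom (convexHull ℝ (Set.range x)) am bm k)).Nonempty)
    (y : EuclideanSpace ℝ (Fin d)) (hy : y ∈ convexHull ℝ (Set.range x)) :
    AstarInf x z ε y ≤ affEval (ap j - am k) (bp j - bm k) y ∧
    affEval (ap j - am k) (bp j - bm k) y ≤ AstarSup x z ε y := by
  classical
  set T := {i : Fin N | x i ∈
        affDom (convexHull ℝ (Set.range x)) ap bp j ∩
        affDom (convexHull ℝ (Set.range x)) am bm k} with hT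
  obtain ⟨s, hsT, hs⟩ := Finset.exists_subset_card_eq
    (show d + 1 ≤ T.toFinset.card by
      rw [← Set.ncard_eq_toFinset_card']; exact hwb j k hjk)
  set ι : Fin (d + 1) → Fin N := fun i => s.orderEmbOfFin hs i with hιdef
  have hι : StrictMono ι := (s.orderEmbOfFin hs).strictMono
  obtain ⟨B, hB⟩ := exists_affineBasis hgen hι
  have hclose : ∀ i, |affEval (ap j - am k) (bp j - bm k) (B i) - z (ι i)| ≤ ε := by
    intro i
    have hi : ι i ∈ T := by
      simpa using hsT (s.orderEmbOfFin_mem hs i)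
    obtain ⟨⟨hD, h1⟩, -, h2⟩ := hi
    have h := happrox (ι i)
    rw [hf _ hD, h1, h2] at h
    have e : affEval (ap j - am k) (bp j - bm k) (x (ι i)) =
        affEval (ap j) (bp j) (x (ι i)) - affEval (am k) (bm k) (x (ι i)) := by
      simp only [affEval, inner_sub_left]; ring
    rw [hB, e]
    exact h
  have hfin := finite_Astar_values hgen z ε y
  have key : ∀ e : Fin (d + 1) → ℝ, (∀ i, e i = -ε ∨ e i = ε) →
      ∑ i, B.coord i y * (z (ι i) + e i) ∈ (fun p => affEval p.1 p.2 y) '' Astar x z ε := by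
    intro e he
    obtain ⟨p, hp⟩ := exists_affEval_eq B (fun i => z (ι i) + e i)
    refine ⟨p, ⟨ι, hι, e, he, fun i => by rw [← hB, hp]⟩, ?_⟩
    simp only
    rw [affEval_eq_sum_coord B]
    simp only [hp]
  rw [affEval_eq_sum_coord B]
  constructor
  · refine (csInf_le hfin.bddBelow
      (key (fun i => if 0 ≤ B.coord i y then -ε else ε) fun i => by
        split_ifs <;> simp)).trans (Finset.sum_le_sum fun i _ => ?_)
    have h := abs_le.1 (hclose i)
    split_ifs with hw
    · exact mul_le_mul_of_nonneg_left (by linarith) hw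
    · exact mul_le_mul_of_nonpos_left (by linarith) (not_le.1 hw).le
  · refine le_trans (Finset.sum_le_sum fun i _ => ?_) (le_csSup hfin.bddAbove
      (key (fun i => if 0 ≤ B.coord i y then ε else -ε) fun i => by
        split_ifs <;> simp))
    have h := abs_le.1 (hclose i)
    split_ifs with hw
    · exact mul_le_mul_of_nonneg_left (by linarith) hw
    · exact mul_le_mul_of_nonpos_left (by linarith) (not_le.1 hw).le
end
end

section
/- Let d ≥ 1, let x_1, …, x_{d+1} ∈ ℝ^d be affinely independent, let z_1, …, z_{d+1} ∈ ℝ, and let ε ≥ 0. For each sign vector e ∈ {−ε, +ε}^{d+1}, let h_e : ℝ^d → ℝ denote the unique affine function with h_e(x_i) = z_i + e_i for all i, and write h_e(x) = α_{h_e}·x + β_{h_e}. Then for every affine function g(x) = α·x + β with |g(x_i) − z_i| ≤ ε for all i = 1, …, d+1, one has for every coordinate r ∈ {1,…,d}: min_{e} (α_{h_e})_r ≤ α_r ≤ max_{e} (α_{h_e})_r, and min_{e} β_{h_e} ≤ β ≤ max_{e} β_{h_e}, where the extrema are over e ∈ {−ε, +ε}^{d+1}. -/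
open scoped RealInnerProductSpace

/-!
The `d + 1` affinely independent points form an affine basis of `ℝ^d`, so the value of an affine
function at any point `v` is a fixed linear combination (the barycentric coordinates of `v`) of its
values at the `x i`. The bias is the value at `0`, and the `r`-th linear coefficient is the value at
the `r`-th unit vector minus the bias; hence each of them is a fixed linear functional
`t ↦ ∑ i, c i * t i` of the vector of values `t i = g (x i)`. On the box `|t i - z i| ≤ ε` such a
functional is extremal at the vertex chosen by the signs of `c`, and the vertices of the box are
the value vectors of the functions `h e`.
-/

/-- A linear functional on the box `|t i - z i| ≤ ε` is bounded above by its value at the vertex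
selected by the signs of its coefficients. -/
lemma exists_vertex_sum_ge {ι : Type*} [Fintype ι] (c t z : ι → ℝ) (ε : ℝ)
    (ht : ∀ i, |t i - z i| ≤ ε) :
    ∃ e : ι → Bool, ∑ i, c i * t i ≤ ∑ i, c i * (z i + (if e i then ε else -ε)) := by
  refine ⟨fun i => decide (0 ≤ c i), Finset.sum_le_sum fun i _ => ?_⟩
  have hi := abs_le.mp (ht i)
  by_cases hc : 0 ≤ c i
  · simp only [hc, decide_true, if_true]
    exact mul_le_mul_of_nonneg_left (by linarith) hc
  · simp only [hc, decide_false, Bool.false_eq_true, if_false]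
    exact mul_le_mul_of_nonpos_left (by linarith) (le_of_not_ge hc)

/-- If `F e` is the value of a linear functional at the vertex `e` of the box, then its value at
any point of the box lies between the extrema of `F`. -/
lemma sum_mem_between_vertices {ι : Type*} [Fintype ι] (c t z : ι → ℝ) (ε : ℝ)
    (ht : ∀ i, |t i - z i| ≤ ε) (F : (ι → Bool) → ℝ)
    (hF : ∀ e, F e = ∑ i, c i * (z i + (if e i then ε else -ε))) :
    (⨅ e, F e) ≤ ∑ i, c i * t i ∧ ∑ i, c i * t i ≤ ⨆ e, F e := by
  constructor
  · obtain ⟨e, he⟩ := exists_vertex_sum_ge (fun i => -c i) t z ε ht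
    simp only [neg_mul, Finset.sum_neg_distrib, neg_le_neg_iff] at he
    classical
    exact (ciInf_le (Set.finite_range F).bddBelow e).trans ((hF e).le.trans he)
  · obtain ⟨e, he⟩ := exists_vertex_sum_ge c t z ε ht
    classical
    exact he.trans ((hF e).ge.trans (le_ciSup (Set.finite_range F).bddAbove e))

/-- Barycentric coordinates: an affine function's value at `v` is a combination, with weights not
depending on the function, of its values at `d + 1` affinely independent points of `ℝ^d`. -/
lemma exists_weights_affine_eval {d : ℕ} {x : Fin (d + 1) → EuclideanSpace ℝ (Fin d)}
    (hx : AffineIndependent ℝ x) (v : EuclideanSpace ℝ (Fin d)) :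
    ∃ w : Fin (d + 1) → ℝ, ∀ (a : EuclideanSpace ℝ (Fin d)) (b : ℝ),
      ⟪a, v⟫ + b = ∑ i, w i * (⟪a, x i⟫ + b) := by
  have htop : affineSpan ℝ (Set.range x) = ⊤ :=
    hx.affineSpan_eq_top_iff_card_eq_finrank_add_one.mpr (by simp)
  let B : AffineBasis (Fin (d + 1)) ℝ (EuclideanSpace ℝ (Fin d)) := ⟨x, hx, htop⟩
  refine ⟨fun i => B.coord i v, fun a b => ?_⟩
  have h1 : ∑ i, B.coord i v = 1 := B.sum_coord_apply_eq_one v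
  have h2 : ∑ i, B.coord i v • x i = v := B.linear_combination_coord_eq_self v
  simp only [mul_add, Finset.sum_add_distrib, ← Finset.sum_mul, h1, one_mul]
  congr 1
  conv_lhs => rw [← h2]
  simp only [inner_sum, real_inner_smul_right]

/-- With `h e` (for each sign vector `e : Fin (d+1) → Bool`, `true`
coding `+ε` and `false` coding `−ε`) the unique affine function interpolating the
perturbed values `z i ± ε` at `d+1` affinely independent points, each linear coefficient
and the bias of any affine `ε`-approximation `g(x) = α·x + β` of the data lies between
the corresponding extrema over the `h e`. -/
theorem affine_approx_coefficients_between_vertex_interpolants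
    (d : ℕ) (hd : 1 ≤ d)
    (x : Fin (d + 1) → EuclideanSpace ℝ (Fin d))
    (hx : AffineIndependent ℝ x)
    (z : Fin (d + 1) → ℝ) (ε : ℝ) (hε : 0 ≤ ε)
    (h : (Fin (d + 1) → Bool) → EuclideanSpace ℝ (Fin d) × ℝ)
    (hh : ∀ (e : Fin (d + 1) → Bool) (i : Fin (d + 1)),
      ⟪(h e).1, x i⟫ + (h e).2 = z i + (if e i then ε else -ε))
    (α : EuclideanSpace ℝ (Fin d)) (β : ℝ)
    (hg : ∀ i, |(⟪α, x i⟫ + β) - z i| ≤ ε) :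
    (∀ r : Fin d,
      (⨅ e : Fin (d + 1) → Bool, (h e).1 r) ≤ α r ∧
      α r ≤ ⨆ e : Fin (d + 1) → Bool, (h e).1 r) ∧
    ((⨅ e : Fin (d + 1) → Bool, (h e).2) ≤ β ∧
      β ≤ ⨆ e : Fin (d + 1) → Bool, (h e).2) := by
  obtain ⟨w, hw⟩ := exists_weights_affine_eval hx 0
  have hbias : ∀ (a : EuclideanSpace ℝ (Fin d)) (b : ℝ), b = ∑ i, w i * (⟪a, x i⟫ + b) := by
    intro a b
    simpa using hw a b
  refine ⟨fun r => ?_, ?_⟩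
  · obtain ⟨u, hu⟩ := exists_weights_affine_eval hx (EuclideanSpace.single r (1 : ℝ))
    have hcoef : ∀ (a : EuclideanSpace ℝ (Fin d)) (b : ℝ),
        a r = ∑ i, (u i - w i) * (⟪a, x i⟫ + b) := by
      intro a b
      have h1 := hu a b
      simp only [EuclideanSpace.inner_single_right, one_mul, conj_trivial] at h1
      simp only [sub_mul, Finset.sum_sub_distrib]
      linarith [hbias a b]
    rw [hcoef α β]
    refine sum_mem_between_vertices _ _ z ε hg _ fun e => ?_
    simp only [← hh e]
    exact hcoef _ _
  · have key := sum_mem_between_vertices w _ z ε hg (fun e => (h e).2) fun e => by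
      simp only [← hh e]
      exact hbias _ _
    rwa [← hbias α β] at key
end

section
/- Let ε ≥ 0 and let f : D → ℝ have a DC representation with P⁺, P⁻ ≥ 1 pieces such that f is a well-behaved ε-approximation of S. Let (j, k) ∈ {1,…,P⁺} × {1,…,P⁻} be such that D_j⁺ ∩ D_k⁻ has nonempty interior in ℝ^d. Then for every coordinate r ∈ {1,…,d}: a̲_r ≤ (a_j⁺ − a_k⁻)_r ≤ ā_r, and b̲ ≤ b_j⁺ − b_k⁻ ≤ b̄. -/
/-!
The coefficient vector and the bias of an affine function are linear functionals of the pair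
`(a, b)`. If `x ∘ ι` are `d + 1` affinely independent points, evaluation at them is a linear
isomorphism `E × ℝ ≃ ℝ^(d+1)` (`evalEquiv`), so any linear functional `φ` of `(a, b)` has the form
`∑ k, c k * w k`, where `w` is the vector of values at these points. When the values are confined
to the box `|w k - z (ι k)| ≤ ε`, such a sum is largest at the vertex `w k = z (ι k) ± ε` whose
signs are those of the `c k`; this vertex is an element of `A*_ε(S)` (`exists_mem_Astar_ge`).

Where `D_j⁺ ∩ D_k⁻` has nonempty interior, well-behavedness supplies `d + 1` data points at which
`f` equals the affine function `(ap j - am k, bp j - bm k)`, and there the values are within `ε`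
of the data. Applying the above to `± φ`, with `φ` a coordinate or the bias, bounds `φ` by values
attained on `A*_ε(S)`; as `A*_ε(S)` is finite (`Astar_finite`), these are bounded by the supremum
and the infimum.
-/

open scoped RealInnerProductSpace

noncomputable section

/-- `ā_r = max_{g ∈ A*_ε(S)} (α_g)_r`. -/
def AstarCoeffSup {d N : ℕ} (x : Fin N → EuclideanSpace ℝ (Fin d)) (z : Fin N → ℝ)
    (ε : ℝ) (r : Fin d) : ℝ :=
  sSup ((fun p => p.1 r) '' Astar x z ε)

/-- `a̲_r = min_{g ∈ A*_ε(S)} (α_g)_r`. -/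
def AstarCoeffInf {d N : ℕ} (x : Fin N → EuclideanSpace ℝ (Fin d)) (z : Fin N → ℝ)
    (ε : ℝ) (r : Fin d) : ℝ :=
  sInf ((fun p => p.1 r) '' Astar x z ε)

/-- `b̄ = max_{g ∈ A*_ε(S)} β_g`. -/
def AstarBiasSup {d N : ℕ} (x : Fin N → EuclideanSpace ℝ (Fin d)) (z : Fin N → ℝ)
    (ε : ℝ) : ℝ :=
  sSup (Prod.snd '' Astar x z ε)

/-- `b̲ = min_{g ∈ A*_ε(S)} β_g`. -/
def AstarBiasInf {d N : ℕ} (x : Fin N → EuclideanSpace ℝ (Fin d)) (z : Fin N → ℝ)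
    (ε : ℝ) : ℝ :=
  sInf (Prod.snd '' Astar x z ε)

/-- Evaluation of the affine function coded by `(a, b)` at finitely many points, as a linear map
in `(a, b)`. -/
def evalLin {d n : ℕ} (v : Fin n → EuclideanSpace ℝ (Fin d)) :
    (EuclideanSpace ℝ (Fin d) × ℝ) →ₗ[ℝ] (Fin n → ℝ) where
  toFun p k := affEval p.1 p.2 (v k)
  map_add' p q := by
    ext k
    simp only [affEval, Prod.fst_add, Prod.snd_add, inner_add_left, Pi.add_apply]
    ring
  map_smul' c p := by
    ext k
    simp only [affEval, Prod.smul_fst, Prod.smul_snd, real_inner_smul_left, Pi.smul_apply,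
      smul_eq_mul, RingHom.id_apply]
    ring

/-- An affine function vanishing at `d + 1` affinely independent points of `ℝ^d` vanishes on
their affine span, which is all of `ℝ^d`. -/
lemma evalLin_injective {d : ℕ} {v : Fin (d + 1) → EuclideanSpace ℝ (Fin d)}
    (hv : AffineIndependent ℝ v) : Function.Injective (evalLin v) := by
  rw [injective_iff_map_eq_zero]
  rintro ⟨a, b⟩ h
  have htop : affineSpan ℝ (Set.range v) = ⊤ := by
    rw [hv.affineSpan_eq_top_iff_card_eq_finrank_add_one]
    simp
  have key : ∀ y, ⟪a, y⟫ + b = 0 := by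
    intro y
    have hy : y ∈ affineSpan ℝ (Set.range v) := by rw [htop]; trivial
    refine affineSpan_induction (p := fun y => ⟪a, y⟫ + b = 0) hy ?_ ?_
    · rintro _ ⟨k, rfl⟩
      exact congrFun h k
    · intro c u w t hu hw ht
      simp only [vsub_eq_sub, vadd_eq_add, inner_add_right, inner_smul_right, inner_sub_right]
      linear_combination c * hu - c * hw + ht
  have hb : b = 0 := by simpa using key 0
  have ha : a = 0 := by simpa [hb] using key a
  simp [ha, hb]

/-- Evaluation at `d + 1` affinely independent points is a linear isomorphism from affine
functions on `ℝ^d` to value vectors. -/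
def evalEquiv {d : ℕ} {v : Fin (d + 1) → EuclideanSpace ℝ (Fin d)}
    (hv : AffineIndependent ℝ v) :
    (EuclideanSpace ℝ (Fin d) × ℝ) ≃ₗ[ℝ] (Fin (d + 1) → ℝ) :=
  LinearEquiv.ofInjectiveOfFinrankEq (evalLin v) (evalLin_injective hv) (by simp)

lemma affineIndependent_comp {d N : ℕ} {x : Fin N → EuclideanSpace ℝ (Fin d)}
    (hgen : ∀ s : Finset (Fin N), s.card = d + 1 → AffineIndependent ℝ (fun i : s => x i))
    {ι : Fin (d + 1) → Fin N} (hι : Function.Injective ι) :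
    AffineIndependent ℝ (x ∘ ι) := by
  have h := hgen (Finset.univ.image ι) (by simp [Finset.card_image_of_injective _ hι])
  let g : Fin (d + 1) ↪ (Finset.univ.image ι : Finset (Fin N)) :=
    ⟨fun k => ⟨ι k, Finset.mem_image_of_mem _ (Finset.mem_univ k)⟩,
      fun a b hab => hι (congrArg Subtype.val hab)⟩
  exact h.comp_embedding g

/-- There are finitely many choices of indices and signs, and general position makes the
interpolating affine function unique for each choice. -/
lemma Astar_finite {d N : ℕ} {x : Fin N → EuclideanSpace ℝ (Fin d)} {z : Fin N → ℝ} {ε : ℝ}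
    (hgen : ∀ s : Finset (Fin N), s.card = d + 1 → AffineIndependent ℝ (fun i : s => x i)) :
    (Astar x z ε).Finite := by
  have hE : {e : Fin (d + 1) → ℝ | ∀ k, e k ∈ ({-ε, ε} : Set ℝ)}.Finite :=
    Set.Finite.pi' fun _ => Set.toFinite _
  have hU : (⋃ ι ∈ {ι : Fin (d + 1) → Fin N | StrictMono ι},
      ⋃ e ∈ {e : Fin (d + 1) → ℝ | ∀ k, e k ∈ ({-ε, ε} : Set ℝ)},
        {p : EuclideanSpace ℝ (Fin d) × ℝ |
          ∀ k, affEval p.1 p.2 (x (ι k)) = z (ι k) + e k}).Finite := by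
    refine (Set.toFinite _).biUnion fun ι hι => hE.biUnion fun e _ => Set.Subsingleton.finite ?_
    intro p hp q hq
    have hι : StrictMono ι := hι
    refine evalLin_injective (affineIndependent_comp hgen hι.injective) (funext fun k => ?_)
    exact (hp k).trans (hq k).symm
  refine hU.subset ?_
  rintro p ⟨ι, hι, e, he, hp⟩
  simp only [Set.mem_iUnion]
  exact ⟨ι, hι, e, he, hp⟩

/-- A linear functional on affine functions whose values at `d + 1` data points are within `ε` of
the data is dominated by its value at some element of `A*_ε(S)`. -/
lemma exists_mem_Astar_ge {d N : ℕ} {x : Fin N → EuclideanSpace ℝ (Fin d)} {z : Fin N → ℝ}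
    {ε : ℝ}
    (hgen : ∀ s : Finset (Fin N), s.card = d + 1 → AffineIndependent ℝ (fun i : s => x i))
    {ι : Fin (d + 1) → Fin N} (hι : StrictMono ι) (p : EuclideanSpace ℝ (Fin d) × ℝ)
    (hp : ∀ k, |affEval p.1 p.2 (x (ι k)) - z (ι k)| ≤ ε)
    (φ : (EuclideanSpace ℝ (Fin d) × ℝ) →ₗ[ℝ] ℝ) :
    ∃ q ∈ Astar x z ε, φ p ≤ φ q := by
  let L := evalEquiv (affineIndependent_comp hgen hι.injective)
  let c : Fin (d + 1) → ℝ := fun k => φ (L.symm fun l => if k = l then 1 else 0)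
  have hφ : ∀ q, φ q = ∑ k, L q k * c k := by
    intro q
    have h := (φ ∘ₗ L.symm.toLinearMap).pi_apply_eq_sum_univ (L q)
    simpa only [LinearMap.comp_apply, LinearEquiv.coe_coe, LinearEquiv.symm_apply_apply,
      smul_eq_mul] using h
  -- The vertex of the box at which the linear form with coefficients `c` is maximal.
  let e : Fin (d + 1) → ℝ := fun k => if 0 ≤ c k then ε else -ε
  let w : Fin (d + 1) → ℝ := fun k => z (ι k) + e k
  have hLw : L (L.symm w) = w := L.apply_symm_apply w
  refine ⟨L.symm w, ⟨ι, hι, e, fun k => ?_, fun k => congrFun hLw k⟩, ?_⟩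
  · by_cases h : 0 ≤ c k <;> simp [e, h]
  · rw [hφ p, hφ (L.symm w), hLw]
    refine Finset.sum_le_sum fun k _ => ?_
    have hk := abs_le.mp (hp k)
    change affEval p.1 p.2 (x (ι k)) * c k ≤ (z (ι k) + e k) * c k
    by_cases h : 0 ≤ c k
    · simp only [e, h, if_true]
      exact mul_le_mul_of_nonneg_right (by linarith) h
    · simp only [e, h, if_false]
      exact mul_le_mul_of_nonpos_right (by linarith) (by linarith)

lemma bounds_of_functional {d N : ℕ} {x : Fin N → EuclideanSpace ℝ (Fin d)} {z : Fin N → ℝ}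
    {ε : ℝ}
    (hgen : ∀ s : Finset (Fin N), s.card = d + 1 → AffineIndependent ℝ (fun i : s => x i))
    {ι : Fin (d + 1) → Fin N} (hι : StrictMono ι) (p : EuclideanSpace ℝ (Fin d) × ℝ)
    (hp : ∀ k, |affEval p.1 p.2 (x (ι k)) - z (ι k)| ≤ ε)
    (φ : (EuclideanSpace ℝ (Fin d) × ℝ) →ₗ[ℝ] ℝ) :
    sInf (φ '' Astar x z ε) ≤ φ p ∧ φ p ≤ sSup (φ '' Astar x z ε) := by
  have hfin := (Astar_finite (z := z) (ε := ε) hgen).image φ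
  constructor
  · obtain ⟨q, hq, h⟩ := exists_mem_Astar_ge hgen hι p hp (-φ)
    exact (csInf_le hfin.bddBelow ⟨q, hq, rfl⟩).trans (by simpa using h)
  · obtain ⟨q, hq, h⟩ := exists_mem_Astar_ge hgen hι p hp φ
    exact h.trans (le_csSup hfin.bddAbove ⟨q, hq, rfl⟩)

/-- Coefficient and bias bounds for the affine piece `f_j⁺ − f_k⁻` of a
well-behaved ε-approximation, when `D_j⁺ ∩ D_k⁻` has nonempty interior. -/
theorem affine_piece_coefficient_bounds
    (d N : ℕ) (hd : 1 ≤ d) (hN : d + 1 ≤ N)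
    (x : Fin N → EuclideanSpace ℝ (Fin d)) (z : Fin N → ℝ)
    (hgen : ∀ s : Finset (Fin N), s.card = d + 1 →
      AffineIndependent ℝ (fun i : s => x i))
    (ε : ℝ) (hε : 0 ≤ ε)
    (Pp Pm : ℕ) (hPp : 0 < Pp) (hPm : 0 < Pm)
    (ap : Fin Pp → EuclideanSpace ℝ (Fin d)) (bp : Fin Pp → ℝ)
    (am : Fin Pm → EuclideanSpace ℝ (Fin d)) (bm : Fin Pm → ℝ)
    (f : EuclideanSpace ℝ (Fin d) → ℝ)
    (hf : ∀ y ∈ convexHull ℝ (Set.range x),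
      f y = cpwlMax ap bp y - cpwlMax am bm y)
    (happrox : ∀ i, |f (x i) - z i| ≤ ε)
    (hwb : ∀ (j : Fin Pp) (k : Fin Pm),
      (interior (affDom (convexHull ℝ (Set.range x)) ap bp j ∩
        affDom (convexHull ℝ (Set.range x)) am bm k)).Nonempty →
      d + 1 ≤ Set.ncard {i : Fin N | x i ∈
        affDom (convexHull ℝ (Set.range x)) ap bp j ∩
        affDom (convexHull ℝ (Set.range x)) am bm k})
    (j : Fin Pp) (k : Fin Pm)
    (hjk : (interior (affDom (convexHull ℝ (Set.range x)) ap bp j ∩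
      affDom (convexHull ℝ (Set.range x)) am bm k)).Nonempty) :
    (∀ r : Fin d,
      AstarCoeffInf x z ε r ≤ (ap j - am k) r ∧
      (ap j - am k) r ≤ AstarCoeffSup x z ε r) ∧
    (AstarBiasInf x z ε ≤ bp j - bm k ∧ bp j - bm k ≤ AstarBiasSup x z ε) := by
  have hcard := hwb j k hjk
  set T := {i : Fin N | x i ∈ affDom (convexHull ℝ (Set.range x)) ap bp j ∩
    affDom (convexHull ℝ (Set.range x)) am bm k} with hT
  obtain ⟨t, htT, htc⟩ := Set.exists_subset_card_eq hcard
  obtain ⟨s, rfl⟩ := (Set.toFinite t).exists_finset_coe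
  rw [Set.ncard_coe_finset] at htc
  let ι : Fin (d + 1) → Fin N := s.orderEmbOfFin htc
  have hι : StrictMono ι := (s.orderEmbOfFin htc).strictMono
  have hp : ∀ l, |affEval (ap j - am k) (bp j - bm k) (x (ι l)) - z (ι l)| ≤ ε := by
    intro l
    obtain ⟨⟨hD, h1⟩, -, h2⟩ : ι l ∈ T := htT (s.orderEmbOfFin_mem htc l)
    have h := happrox (ι l)
    rw [hf _ hD, h1, h2] at h
    convert h using 3
    simp only [affEval, inner_sub_left]
    ring
  refine ⟨fun r => ?_, ?_⟩
  · exact bounds_of_functional hgen hι (ap j - am k, bp j - bm k) hp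
      ((EuclideanSpace.proj r : EuclideanSpace ℝ (Fin d) →L[ℝ] ℝ).toLinearMap ∘ₗ
        LinearMap.fst ℝ _ ℝ)
  · exact bounds_of_functional hgen hι (ap j - am k, bp j - bm k) hp (LinearMap.snd ℝ _ ℝ)
end
end

section
/- Let d ≥ 1, let n and m be natural numbers with n ≤ d, and let x_1, …, x_n, x'_1, …, x'_m be n+m points of ℝ^d such that every subset of at most d+1 of these n+m points is affinely independent. Let z_1, …, z_n, z'_1, …, z'_m ∈ ℝ and c_1, …, c_m ∈ {−1, +1}. Suppose there exists an affine function f_0 : ℝ^d → ℝ with f_0(x_i) = z_i for all i = 1, …, n and c_i·(f_0(x'_i) − z'_i) ≤ 0 for all i = 1, …, m. Then there exists an affine function f'_0 : ℝ^d → ℝ with f'_0(x_i) = z_i for all i = 1, …, n, c_i·(f'_0(x'_i) − z'_i) ≤ 0 for all i = 1, …, m, and such that the set {i ∈ {1,…,m} : f'_0(x'_i) = z'_i} has at least min(d+1, n+m) − n elements. -/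
/-!
Start from any feasible affine function and make the set `A` of active inequalities grow one element
at a time. As long as `n + #A < min (d + 1) (n + m)`, there is an inactive index `j`, and the
interpolation points, the active points and `x' j` number at most `d + 1`, hence are affinely
independent. So some affine `g` vanishes on all of these points except `x' j`, where it
takes the value `c j` (`AffineIndependent.exists_inner_add_eq`). Moving along `g` preserves the
equalities and all active inequalities, and tightens the inequality at `j`; stopping at the first
time at which some inactive inequality becomes tight enlarges `A` (`exists_more_active`).
-/

open scoped RealInnerProductSpace

/-- Affine functions interpolate arbitrary values on affinely independent points: the vectors
`(p i, 1)` are linearly independent, so a linear functional on `E × ℝ` takes prescribed values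
on them. -/
theorem AffineIndependent.exists_inner_add_eq {ι E : Type*} [Fintype ι] [NormedAddCommGroup E]
    [InnerProductSpace ℝ E] [FiniteDimensional ℝ E] {p : ι → E} (hp : AffineIndependent ℝ p)
    (v : ι → ℝ) : ∃ (a : E) (b : ℝ), ∀ i, ⟪a, p i⟫ + b = v i := by
  have hli : LinearIndependent ℝ (fun i => ((p i, 1) : E × ℝ)) := by
    rw [Fintype.linearIndependent_iff]
    intro w hw i
    have h1 : ∑ i, w i • p i = 0 := by
      simpa [Prod.fst_sum] using congrArg Prod.fst hw
    have h2 : ∑ i, w i = 0 := by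
      simpa [Prod.snd_sum] using congrArg Prod.snd hw
    exact (affineIndependent_iff.mp hp) Finset.univ w h2 h1 i (Finset.mem_univ i)
  obtain ⟨φ, hφ⟩ := LinearMap.exists_extend ((Module.Basis.span hli).constr ℝ v)
  have hφv : ∀ i, φ (p i, 1) = v i := by
    intro i
    have h := LinearMap.congr_fun hφ (Module.Basis.span hli i)
    rw [Module.Basis.constr_basis] at h
    simpa [Module.Basis.span_apply] using h
  refine ⟨(InnerProductSpace.toDual ℝ E).symm
    (LinearMap.toContinuousLinearMap (φ ∘ₗ LinearMap.inl ℝ E ℝ)), φ (0, 1), fun i => ?_⟩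
  rw [InnerProductSpace.toDual_symm_apply, ← hφv i]
  simp [← map_add]

/-- If a feasible affine function has fewer active inequalities than claimed, another feasible
affine function has strictly more. -/
theorem exists_more_active
    {d n m : ℕ} {x : Fin n → EuclideanSpace ℝ (Fin d)} {x' : Fin m → EuclideanSpace ℝ (Fin d)}
    (hgen : ∀ s : Finset (Fin n ⊕ Fin m), s.card ≤ d + 1 →
      AffineIndependent ℝ (fun i : s => Sum.elim x x' i))
    {z : Fin n → ℝ} {z' : Fin m → ℝ} {c : Fin m → ℝ} (hc : ∀ i, c i = -1 ∨ c i = 1)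
    {a : EuclideanSpace ℝ (Fin d)} {b : ℝ}
    (heq : ∀ i, ⟪a, x i⟫ + b = z i)
    (hle : ∀ i, c i * ((⟪a, x' i⟫ + b) - z' i) ≤ 0)
    (hlt : n + Set.ncard {i : Fin m | ⟪a, x' i⟫ + b = z' i} < min (d + 1) (n + m)) :
    ∃ (a' : EuclideanSpace ℝ (Fin d)) (b' : ℝ),
      (∀ i, ⟪a', x i⟫ + b' = z i) ∧
      (∀ i, c i * ((⟪a', x' i⟫ + b') - z' i) ≤ 0) ∧
      Set.ncard {i : Fin m | ⟪a, x' i⟫ + b = z' i} <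
        Set.ncard {i : Fin m | ⟪a', x' i⟫ + b' = z' i} := by
  classical
  set A : Finset (Fin m) := Finset.univ.filter (fun i => ⟪a, x' i⟫ + b = z' i) with hA
  have hAset : {i : Fin m | ⟪a, x' i⟫ + b = z' i} = (A : Set (Fin m)) := by ext; simp [hA]
  rw [hAset, Set.ncard_coe_finset] at hlt ⊢
  obtain ⟨hd', hm'⟩ := lt_min_iff.mp hlt
  have hAm : A.card < (Finset.univ : Finset (Fin m)).card := by
    rw [Finset.card_univ, Fintype.card_fin]; omega
  obtain ⟨j, -, hj⟩ := Finset.exists_mem_notMem_of_card_lt_card hAm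
  let s : Finset (Fin n ⊕ Fin m) := Finset.univ.disjSum (insert j A)
  have hs : s.card ≤ d + 1 := by
    rw [Finset.card_disjSum, Finset.card_insert_of_notMem hj, Finset.card_univ, Fintype.card_fin]
    omega
  obtain ⟨u, w, huw⟩ := (hgen s hs).exists_inner_add_eq
    (fun i => if (i : Fin n ⊕ Fin m) = Sum.inr j then c j else 0)
  have hgx : ∀ i, ⟪u, x i⟫ + w = 0 := fun i => by
    simpa using huw ⟨Sum.inl i, by simp [s]⟩
  have hgA : ∀ i ∈ A, ⟪u, x' i⟫ + w = 0 := fun i hi => by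
    have hij : i ≠ j := fun h => hj (h ▸ hi)
    simpa [hij] using huw ⟨Sum.inr i, by simp [s, hi]⟩
  have hgj : ⟪u, x' j⟫ + w = c j := by
    simpa using huw ⟨Sum.inr j, by simp [s]⟩
  -- Write `f y = ⟪a, y⟫ + b` and `g y = ⟪u, y⟫ + w`. `T` collects the inequalities that get
  -- tighter along `f + t • g` as `t` grows; the one at `i` becomes an equality at time
  -- `-c i * (f (x' i) - z' i) / (c i * g (x' i))`.
  let T : Finset (Fin m) := Finset.univ.filter (fun i => 0 < c i * (⟪u, x' i⟫ + w))
  have hT : T.Nonempty := ⟨j, by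
    simp only [T, Finset.mem_filter, Finset.mem_univ, true_and, hgj]
    rcases hc j with h | h <;> rw [h] <;> norm_num⟩
  obtain ⟨k, hkT, hkmin⟩ := T.exists_min_image
    (fun i => -(c i * ((⟪a, x' i⟫ + b) - z' i)) / (c i * (⟪u, x' i⟫ + w))) hT
  have hk : 0 < c k * (⟪u, x' k⟫ + w) := (Finset.mem_filter.mp hkT).2
  set t : ℝ := -(c k * ((⟪a, x' k⟫ + b) - z' k)) / (c k * (⟪u, x' k⟫ + w)) with ht
  have ht0 : 0 ≤ t := div_nonneg (neg_nonneg.mpr (hle k)) hk.le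
  have htk : t * (c k * (⟪u, x' k⟫ + w)) = -(c k * ((⟪a, x' k⟫ + b) - z' k)) :=
    div_mul_cancel₀ _ hk.ne'
  have hval : ∀ y, ⟪a + t • u, y⟫ + (b + t * w) = (⟪a, y⟫ + b) + t * (⟪u, y⟫ + w) := by
    intro y
    rw [inner_add_left, real_inner_smul_left]
    ring
  refine ⟨a + t • u, b + t * w, fun i => ?_, fun i => ?_, ?_⟩
  · rw [hval, hgx, heq]; ring
  · rw [hval]
    by_cases hi : 0 < c i * (⟪u, x' i⟫ + w)
    · have h := hkmin i (by simp [T, hi])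
      rw [le_div_iff₀ hi] at h
      linarith
    · have h := mul_nonneg ht0 (sub_nonneg.mpr (not_lt.mp hi))
      linarith [hle i]
  · have hkA : k ∉ A := fun h => by
      rw [hgA k h, mul_zero] at hk
      exact hk.false
    have hck : c k ≠ 0 := by rcases hc k with h | h <;> rw [h] <;> norm_num
    have hsub : ((insert k A : Finset (Fin m)) : Set (Fin m)) ⊆
        {i : Fin m | ⟪a + t • u, x' i⟫ + (b + t * w) = z' i} := by
      intro i hi
      rw [Set.mem_ofPred_eq, hval]
      rcases Finset.mem_insert.mp (Finset.mem_coe.mp hi) with rfl | hi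
      · apply mul_left_cancel₀ hck
        linarith
      · rw [hgA i hi, (Finset.mem_filter.mp hi).2]; ring
    have h := Set.ncard_le_ncard hsub (Set.toFinite _)
    rw [Set.ncard_coe_finset, Finset.card_insert_of_notMem hkA] at h
    omega

/-- If an affine function satisfies `n ≤ d` interpolation equalities
and `m` sign-constrained inequalities on points in general position, then there is an
affine function satisfying the same constraints for which at least
`min(d+1, n+m) − n` of the inequalities are active (hold with equality). -/
theorem exists_affine_with_active_constraints
    (d n m : ℕ) (hd : 1 ≤ d) (hn : n ≤ d)
    (x : Fin n → EuclideanSpace ℝ (Fin d))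
    (x' : Fin m → EuclideanSpace ℝ (Fin d))
    (hgen : ∀ s : Finset (Fin n ⊕ Fin m), s.card ≤ d + 1 →
      AffineIndependent ℝ (fun i : s => Sum.elim x x' i))
    (z : Fin n → ℝ) (z' : Fin m → ℝ)
    (c : Fin m → ℝ) (hc : ∀ i, c i = -1 ∨ c i = 1)
    (a0 : EuclideanSpace ℝ (Fin d)) (b0 : ℝ)
    (h0eq : ∀ i, ⟪a0, x i⟫ + b0 = z i)
    (h0le : ∀ i, c i * ((⟪a0, x' i⟫ + b0) - z' i) ≤ 0) :
    ∃ (a : EuclideanSpace ℝ (Fin d)) (b : ℝ),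
      (∀ i, ⟪a, x i⟫ + b = z i) ∧
      (∀ i, c i * ((⟪a, x' i⟫ + b) - z' i) ≤ 0) ∧
      min (d + 1) (n + m) - n ≤ Set.ncard {i : Fin m | ⟪a, x' i⟫ + b = z' i} := by
  have key : ∀ k, k ≤ min (d + 1) (n + m) - n →
      ∃ (a : EuclideanSpace ℝ (Fin d)) (b : ℝ),
        (∀ i, ⟪a, x i⟫ + b = z i) ∧
        (∀ i, c i * ((⟪a, x' i⟫ + b) - z' i) ≤ 0) ∧
        k ≤ Set.ncard {i : Fin m | ⟪a, x' i⟫ + b = z' i} := by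
    intro k
    induction k with
    | zero => exact fun _ => ⟨a0, b0, h0eq, h0le, Nat.zero_le _⟩
    | succ k ih =>
      intro hk
      obtain ⟨a, b, heq, hle, hcard⟩ := ih (by omega)
      by_cases hlt : n + Set.ncard {i : Fin m | ⟪a, x' i⟫ + b = z' i} < min (d + 1) (n + m)
      · obtain ⟨a', b', heq', hle', hcard'⟩ := exists_more_active hgen hc heq hle hlt
        exact ⟨a', b', heq', hle', by omega⟩
      · exact ⟨a, b, heq, hle, by omega⟩
  exact key _ le_rfl
end
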